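/- Let θ ∼ N(μ′, Σ) be a Gaussian random vector in ℝ^d, and define ℓ_BC(θ) = ½‖θ − μ‖² and the cliff reward J with parameters C ≫ ε² > 0 and optimum θ* = μ. There exist universal constants c₂, c₃ > 0 such that, if E[ℓ_BC(θ)] ≤ ε²/8, then J(θ*) − E[J(θ)] ≤ 2·E[ℓ_BC(θ)] + C·c₂·exp(−c₃·ε²/(2·E[ℓ_BC(θ)])). In particular, if ε² ≥ c₃^{−1}·E[ℓ_BC(θ)]·log(c₂·C/E[ℓ_BC(θ)]), then J(θ*) − E[J(θ)] ≤ 3·E[ℓ_BC(θ)]. -/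

import Mathlib

open MeasureTheory ProbabilityTheory

/-- The standard Gaussian measure on `ℝ^d` (i.i.d. `N(0,1)` coordinates). -/
noncomputable def stdGaussianPi (d : ℕ) : Measure (Fin d → ℝ) :=
  Measure.pi fun _ => gaussianReal 0 1

/-- `ν` is the law of a (possibly degenerate) Gaussian random vector in `ℝ^d` with mean `μ'`:
the pushforward of the standard Gaussian under the affine map `z ↦ μ' + A z` (so the covariance
is `Σ = A Aᵀ`). -/
def IsGaussianLaw {d : ℕ} (ν : Measure (Fin d → ℝ)) (μ' : Fin d → ℝ) : Prop :=
  ∃ A : Matrix (Fin d) (Fin d) ℝ,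
    ν = Measure.map (fun z => μ' + A.mulVec z) (stdGaussianPi d)

/-- Squared Euclidean norm on `ℝ^d`. -/
noncomputable def sqnorm {d : ℕ} (v : Fin d → ℝ) : ℝ := ∑ i, v i ^ 2

/-- The cliff reward on `ℝ^d` with target `μ` and parameters `ε, C`:
`J(θ) = −‖θ−μ‖²` if `‖θ − μ‖ ≤ ε`, and `J(θ) = −C` otherwise; `J(μ) = 0`. -/
noncomputable def cliffJVec {d : ℕ} (μ : Fin d → ℝ) (ε C : ℝ) (θ : Fin d → ℝ) : ℝ :=
  if Real.sqrt (sqnorm (θ - μ)) ≤ ε then -sqnorm (θ - μ) else -C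


lemma isGaussian_of_law {d : ℕ} {ν : Measure (Fin d → ℝ)} {μ' : Fin d → ℝ}
    (h : IsGaussianLaw ν μ') : IsGaussian ν := by
  obtain ⟨A, rfl⟩ := h
  have h1 : IsGaussian (stdGaussianPi d) := by
    unfold stdGaussianPi
    have hind : iIndepFun (fun (i : Fin d) (ω : Fin d → ℝ) => ω i)
        (Measure.pi fun _ : Fin d => gaussianReal 0 1) :=
      iIndepFun_pi (μ := fun _ : Fin d => gaussianReal 0 1) (X := fun _ => (id : ℝ → ℝ))
        (fun _ => aemeasurable_id)
    have h2 := iIndepFun.hasGaussianLaw (P := Measure.pi fun _ : Fin d => gaussianReal 0 1)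
      (X := fun (i : Fin d) (ω : Fin d → ℝ) => ω i) (fun i => ⟨by
        have := (measurePreserving_eval (fun _ : Fin d => gaussianReal 0 1) i).map_eq
        change IsGaussian (Measure.map (Function.eval i : (Fin d → ℝ) → ℝ)
          (Measure.pi fun _ : Fin d => gaussianReal 0 1))
        rw [this]
        infer_instance⟩) hind
    have h3 := h2.isGaussian_map
    rwa [show (fun ω : Fin d → ℝ => (fun i => ω i)) = id from rfl, Measure.map_id] at h3
  let L : (Fin d → ℝ) →L[ℝ] (Fin d → ℝ) := LinearMap.toContinuousLinearMap A.mulVecLin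
  have h4 : Measure.map (fun z => μ' + A.mulVec z) (stdGaussianPi d)
      = Measure.map (fun z => μ' + z) (Measure.map L (stdGaussianPi d)) := by
    rw [Measure.map_map (by fun_prop) (by fun_prop)]
    rfl
  rw [h4]
  infer_instance

lemma coord_map {d : ℕ} {ν : Measure (Fin d → ℝ)} [IsGaussian ν] (μ : Fin d → ℝ) (i : Fin d) :
    ∃ b s : ℝ, ν.map (fun x => x i - μ i) = (gaussianReal 0 1).map (fun g => b + s * g) := by
  have h1 := IsGaussian.map_eq_gaussianReal (μ := ν) (ContinuousLinearMap.proj i)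
  set a := ν[(ContinuousLinearMap.proj i : StrongDual ℝ (Fin d → ℝ))]
  set v := (Var[(ContinuousLinearMap.proj i : StrongDual ℝ (Fin d → ℝ)); ν]).toNNReal
  refine ⟨a - μ i, Real.sqrt v, ?_⟩
  have h2 : ν.map (fun x => x i - μ i) = gaussianReal (a - μ i) v := by
    rw [← gaussianReal_map_sub_const, ← h1, Measure.map_map (by fun_prop) (by fun_prop)]
    rfl
  have h3 : (gaussianReal 0 1).map (fun g => (a - μ i) + Real.sqrt v * g)
      = gaussianReal (a - μ i) v := by
    have : (fun g : ℝ => (a - μ i) + Real.sqrt v * g)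
      = (fun y => (a - μ i) + y) ∘ (fun g => Real.sqrt v * g) := rfl
    rw [this, ← Measure.map_map (by fun_prop) (by fun_prop), gaussianReal_map_const_mul,
      gaussianReal_map_const_add]
    congr 1
    · simp
    · ext; simp
  rw [h2, h3]

lemma coord_bound {Ω : Type*} [MeasurableSpace Ω] {ν : Measure Ω} {κ : ℝ} (hκ : 0 < κ)
    (hexpInt : Integrable (fun g : ℝ => Real.exp (κ * (1 + g ^ 2))) (gaussianReal 0 1))
    {X : Ω → ℝ} (hX : Measurable X) {b s : ℝ}
    (hlaw : ν.map X = (gaussianReal 0 1).map (fun g => b + s * g)) :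
    Integrable (fun ω => X ω ^ 2) ν ∧
    (0 < ∫ ω, X ω ^ 2 ∂ν →
      Integrable (fun ω => Real.exp (κ / (∫ ω, X ω ^ 2 ∂ν) * X ω ^ 2)) ν ∧
      ∫ ω, Real.exp (κ / (∫ ω, X ω ^ 2 ∂ν) * X ω ^ 2) ∂ν
        ≤ ∫ g, Real.exp (κ * (1 + g ^ 2)) ∂(gaussianReal 0 1)) := by
  have hI : ∀ f : ℝ → ℝ, Continuous f →
      (Integrable (fun ω => f (X ω)) ν ↔
        Integrable (fun g => f (b + s * g)) (gaussianReal 0 1)) := by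
    intro f hf
    have e1 := integrable_map_measure (μ := ν) (f := X) (g := f)
      hf.aestronglyMeasurable hX.aemeasurable
    have e2 := integrable_map_measure (μ := gaussianReal 0 1) (f := fun g => b + s * g) (g := f)
      hf.aestronglyMeasurable (by fun_prop)
    rw [hlaw] at e1
    exact e1.symm.trans e2
  have hE : ∀ f : ℝ → ℝ, Continuous f →
      ∫ ω, f (X ω) ∂ν = ∫ g, f (b + s * g) ∂(gaussianReal 0 1) := by
    intro f hf
    have e1 := integral_map (μ := ν) hX.aemeasurable (f := f) hf.aestronglyMeasurable
    have e2 := integral_map (μ := gaussianReal 0 1) (φ := fun g => b + s * g) (by fun_prop)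
      (f := f) hf.aestronglyMeasurable
    rw [hlaw] at e1
    exact e1.symm.trans e2
  have hid : Integrable (fun g : ℝ => g) (gaussianReal 0 1) :=
    (memLp_id_gaussianReal 1).integrable le_rfl
  have hsq : Integrable (fun g : ℝ => g ^ 2) (gaussianReal 0 1) :=
    (memLp_id_gaussianReal 2).integrable_sq
  have hsq1 : ∫ g, g ^ 2 ∂(gaussianReal 0 1) = 1 := by
    have := variance_fun_id_gaussianReal (μ := 0) (v := 1)
    rw [variance_eq_integral (by fun_prop)] at this
    simpa using this
  have hexpand : (fun g : ℝ => (b + s * g) ^ 2)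
      = fun g => b ^ 2 + (2 * b * s) * g + s ^ 2 * g ^ 2 := by
    funext g; ring
  have hint2 : Integrable (fun g : ℝ => (b + s * g) ^ 2) (gaussianReal 0 1) := by
    rw [hexpand]
    exact ((integrable_const _).add (hid.const_mul _)).add (hsq.const_mul _)
  have hlin : Integrable (fun g : ℝ => b ^ 2 + (2 * b * s) * g) (gaussianReal 0 1) :=
    (integrable_const _).add (hid.const_mul _)
  have hm : ∫ ω, X ω ^ 2 ∂ν = b ^ 2 + s ^ 2 := by
    rw [hE (fun x => x ^ 2) (by fun_prop), hexpand,
      integral_add hlin (hsq.const_mul _),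
      integral_add (integrable_const _) (hid.const_mul _), integral_const_mul,
      integral_const_mul, hsq1, integral_id_gaussianReal]
    simp
  refine ⟨(hI (fun x => x ^ 2) (by fun_prop)).2 hint2, ?_⟩
  rw [hm]
  intro hpos
  have hle : ∀ g : ℝ, Real.exp (κ / (b ^ 2 + s ^ 2) * (b + s * g) ^ 2)
      ≤ Real.exp (κ * (1 + g ^ 2)) := by
    intro g
    apply Real.exp_le_exp.2
    rw [div_mul_eq_mul_div, div_le_iff₀ hpos, mul_assoc]
    apply mul_le_mul_of_nonneg_left _ hκ.le
    nlinarith [sq_nonneg (b * g - s)]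
  have hint3 : Integrable (fun g : ℝ => Real.exp (κ / (b ^ 2 + s ^ 2) * (b + s * g) ^ 2))
      (gaussianReal 0 1) := by
    refine hexpInt.mono' (by fun_prop) (ae_of_all _ fun g => ?_)
    rw [Real.norm_eq_abs, abs_of_pos (Real.exp_pos _)]
    exact hle g
  refine ⟨(hI (fun x => Real.exp (κ / (b ^ 2 + s ^ 2) * x ^ 2)) (by fun_prop)).2 hint3, ?_⟩
  rw [hE (fun x => Real.exp (κ / (b ^ 2 + s ^ 2) * x ^ 2)) (by fun_prop)]
  exact integral_mono hint3 hexpInt hle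

lemma tail_bound {d : ℕ} {Ω : Type*} [MeasurableSpace Ω] {ν : Measure Ω}
    {κ c : ℝ} (hκ : 0 < κ)
    (Y : Fin d → Ω → ℝ)
    (hY : ∀ i, Integrable (fun ω => Y i ω ^ 2) ν)
    (hYe : ∀ i, 0 < ∫ ω, Y i ω ^ 2 ∂ν →
      Integrable (fun ω => Real.exp (κ / (∫ ω, Y i ω ^ 2 ∂ν) * Y i ω ^ 2)) ν ∧
      ∫ ω, Real.exp (κ / (∫ ω, Y i ω ^ 2 ∂ν) * Y i ω ^ 2) ∂ν ≤ c)
    (hM : 0 < ∫ ω, ∑ i, Y i ω ^ 2 ∂ν) (r : ℝ) :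
    ν.real {ω | r ≤ ∑ i, Y i ω ^ 2} ≤ c * Real.exp (-(κ * r / ∫ ω, ∑ i, Y i ω ^ 2 ∂ν)) := by
  set m : Fin d → ℝ := fun i => ∫ ω, Y i ω ^ 2 ∂ν with hmdef
  have hMsum : ∫ ω, ∑ i, Y i ω ^ 2 ∂ν = ∑ i, m i := integral_finsetSum _ (fun i _ => hY i)
  set M := ∫ ω, ∑ i, Y i ω ^ 2 ∂ν with hMdef
  have hm0 : ∀ i, 0 ≤ m i := fun i => integral_nonneg fun ω => sq_nonneg _
  have hwsum : ∑ i, m i / M = 1 := by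
    rw [← Finset.sum_div, ← hMsum, div_self hM.ne']
  -- the dominating function
  set G : Ω → ℝ := fun ω => ∑ i, m i / M * Real.exp (κ / m i * Y i ω ^ 2) with hG
  have hterm : ∀ i, Integrable (fun ω => m i / M * Real.exp (κ / m i * Y i ω ^ 2)) ν ∧
      ∫ ω, m i / M * Real.exp (κ / m i * Y i ω ^ 2) ∂ν ≤ m i / M * c := by
    intro i
    rcases (hm0 i).eq_or_lt with h | h
    · simp [← h]
    · obtain ⟨h1, h2⟩ := hYe i h
      refine ⟨h1.const_mul _, ?_⟩
      rw [integral_const_mul]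
      exact mul_le_mul_of_nonneg_left h2 (div_nonneg h.le hM.le)
  have hGint : Integrable G ν := integrable_finsetSum _ fun i _ => (hterm i).1
  have hGle : ∫ ω, G ω ∂ν ≤ c := by
    rw [hG, integral_finsetSum _ fun i _ => (hterm i).1]
    calc _ ≤ ∑ i, m i / M * c := Finset.sum_le_sum fun i _ => (hterm i).2
      _ = c := by rw [← Finset.sum_mul, hwsum, one_mul]
  have hzero : ∀ᵐ ω ∂ν, ∀ i, m i = 0 → Y i ω ^ 2 = 0 := by
    rw [ae_all_iff]
    intro i
    by_cases h : m i = 0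
    · have := (integral_eq_zero_iff_of_nonneg (fun ω => sq_nonneg (Y i ω)) (hY i)).1 h
      filter_upwards [this] with ω hω _
      exact hω
    · exact ae_of_all _ fun ω h' => absurd h' h
  have hdom : ∀ᵐ ω ∂ν, Real.exp (κ / M * ∑ i, Y i ω ^ 2) ≤ G ω := by
    filter_upwards [hzero] with ω hω
    have := convexOn_exp.map_sum_le (t := Finset.univ) (w := fun i => m i / M)
      (p := fun i => κ / m i * Y i ω ^ 2) (fun i _ => div_nonneg (hm0 i) hM.le) hwsum
      (fun i _ => Set.mem_univ _)
    simp only [smul_eq_mul] at this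
    refine le_trans (le_of_eq ?_) this
    rw [Finset.mul_sum]
    congr 1
    refine Finset.sum_congr rfl fun i _ => ?_
    by_cases h : m i = 0
    · rw [hω i h]; simp
    · field_simp
  have hmk := mul_meas_ge_le_integral_of_nonneg (μ := ν) (f := G)
    (ae_of_all _ fun ω => Finset.sum_nonneg fun i _ =>
      mul_nonneg (div_nonneg (hm0 i) hM.le) (Real.exp_pos _).le) hGint (Real.exp (κ * r / M))
  have hfin : ν {ω | Real.exp (κ * r / M) ≤ G ω} ≠ ⊤ := by
    exact (hGint.measure_ge_lt_top (Real.exp_pos _)).ne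
  have hsub : ν.real {ω | r ≤ ∑ i, Y i ω ^ 2} ≤ ν.real {ω | Real.exp (κ * r / M) ≤ G ω} := by
    refine ENNReal.toReal_mono hfin (measure_mono_ae ?_)
    filter_upwards [hdom] with ω hω hr
    refine le_trans (Real.exp_le_exp.2 ?_) hω
    rw [mul_div_right_comm]
    exact mul_le_mul_of_nonneg_left hr (by positivity)
  rw [Real.exp_neg, ← div_eq_mul_inv, le_div_iff₀ (Real.exp_pos _), mul_comm]
  exact (mul_le_mul_of_nonneg_left hsub (Real.exp_pos _).le).trans (hmk.trans hGle)

/-- Let `θ ∼ N(μ′, Σ)` be a Gaussian random vector in `ℝ^d`, with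
`ℓ_BC(θ) = ½‖θ − μ‖²` and the cliff reward `J` with parameters `C ≫ ε² > 0` and optimum
`θ* = μ`. There are universal constants `c₂, c₃ > 0` such that, if `E[ℓ_BC(θ)] ≤ ε²/8`, then
`J(θ*) − E[J(θ)] ≤ 2·E[ℓ_BC(θ)] + C·c₂·exp(−c₃·ε²/(2·E[ℓ_BC(θ)]))`; in particular, if
`ε² ≥ c₃⁻¹·E[ℓ_BC(θ)]·log(c₂·C/E[ℓ_BC(θ)])`, then `J(θ*) − E[J(θ)] ≤ 3·E[ℓ_BC(θ)]`. -/
theorem cliff_loss_small_when_bc_loss_small :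
    ∃ c₂ c₃ : ℝ, 0 < c₂ ∧ 0 < c₃ ∧
      ∀ (d : ℕ) (ν : Measure (Fin d → ℝ)) (μ' : Fin d → ℝ), IsGaussianLaw ν μ' →
        ∀ (μ : Fin d → ℝ) (ε C : ℝ), 0 < ε → ε ^ 2 ≤ C →
          (∫ x, (1 / 2) * sqnorm (x - μ) ∂ν) ≤ ε ^ 2 / 8 →
          (cliffJVec μ ε C μ - (∫ x, cliffJVec μ ε C x ∂ν) ≤
            2 * (∫ x, (1 / 2) * sqnorm (x - μ) ∂ν) +
              C * c₂ * Real.exp (-(c₃ * ε ^ 2) / (2 * ∫ x, (1 / 2) * sqnorm (x - μ) ∂ν))) ∧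
          (c₃⁻¹ * (∫ x, (1 / 2) * sqnorm (x - μ) ∂ν) *
              Real.log (c₂ * C / ∫ x, (1 / 2) * sqnorm (x - μ) ∂ν) ≤ ε ^ 2 →
            cliffJVec μ ε C μ - (∫ x, cliffJVec μ ε C x ∂ν) ≤
              3 * ∫ x, (1 / 2) * sqnorm (x - μ) ∂ν) := by
  obtain ⟨κ, hκ, hκi⟩ := IsGaussian.exists_integrable_exp_sq (gaussianReal 0 1)
  have hexpInt : Integrable (fun g : ℝ => Real.exp (κ * (1 + g ^ 2))) (gaussianReal 0 1) := by
    have := hκi.const_mul (Real.exp κ)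
    refine this.congr (ae_of_all _ fun g => ?_)
    simp only [Real.norm_eq_abs, sq_abs]
    rw [← Real.exp_add]; ring_nf
  set c := ∫ g, Real.exp (κ * (1 + g ^ 2)) ∂(gaussianReal 0 1) with hc
  have hc1 : 1 ≤ c := by
    have := integral_mono (integrable_const (1 : ℝ)) hexpInt
      (fun g => Real.one_le_exp (by positivity))
    simpa using this
  have hc0 : 0 < c := by linarith
  refine ⟨c, κ / 2, hc0, by positivity, ?_⟩
  intro d ν μ' hν μ ε C hε hC _
  have hG := isGaussian_of_law hν
  have hCpos : 0 < C := lt_of_lt_of_le (by positivity) hC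
  choose b s hlaw using coord_map (ν := ν) μ
  have hcoord := fun i : Fin d =>
    coord_bound hκ hexpInt (X := fun x : Fin d → ℝ => x i - μ i) (by fun_prop) (hlaw i)
  have hSint : Integrable (fun x => sqnorm (x - μ)) ν :=
    integrable_finsetSum _ fun i _ => (hcoord i).1
  rw [integral_const_mul]
  set M := ∫ x, sqnorm (x - μ) ∂ν with hM
  have hS0 : ∀ x : Fin d → ℝ, 0 ≤ sqnorm (x - μ) :=
    fun x => Finset.sum_nonneg fun i _ => sq_nonneg _
  have hM0 : 0 ≤ M := integral_nonneg hS0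
  set p := ν.real {x | ε ^ 2 ≤ sqnorm (x - μ)} with hp
  have htail : 0 < M → p ≤ c * Real.exp (-(κ * ε ^ 2 / M)) := fun h =>
    tail_bound hκ (fun i (x : Fin d → ℝ) => x i - μ i) (fun i => (hcoord i).1)
      (fun i => (hcoord i).2) h (ε ^ 2)
  have hp1 : p ≤ 1 := measureReal_le_one
  have hmark : ε ^ 2 * p ≤ M := mul_meas_ge_le_integral_of_nonneg (ae_of_all _ hS0) hSint _
  have hmeas : MeasurableSet {x : Fin d → ℝ | ε ^ 2 ≤ sqnorm (x - μ)} := by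
    have : Continuous (fun x : Fin d → ℝ => sqnorm (x - μ)) := by
      unfold sqnorm; fun_prop
    exact measurableSet_le measurable_const this.measurable
  have hloss : cliffJVec μ ε C μ - ∫ x, cliffJVec μ ε C x ∂ν ≤ M + C * p := by
    have h0 : cliffJVec μ ε C μ = 0 := by simp [cliffJVec, sqnorm, hε.le]
    rw [h0, zero_sub, ← integral_neg]
    have hind : Integrable ({x : Fin d → ℝ | ε ^ 2 ≤ sqnorm (x - μ)}.indicator
        (fun _ => C)) ν := (integrable_const C).indicator hmeas
    calc ∫ x, -cliffJVec μ ε C x ∂ν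
        ≤ ∫ x, (sqnorm (x - μ) + {x : Fin d → ℝ | ε ^ 2 ≤ sqnorm (x - μ)}.indicator
            (fun _ => C) x) ∂ν := by
          refine integral_mono_of_nonneg (ae_of_all _ fun x => ?_) (hSint.add hind)
            (ae_of_all _ fun x => ?_)
          · simp only [cliffJVec, Pi.zero_apply]
            split_ifs
            · simpa using hS0 x
            · simpa using hCpos.le
          · simp only [cliffJVec]
            split_ifs with h
            · rw [neg_neg]
              exact le_add_of_nonneg_right (Set.indicator_nonneg (fun _ _ => hCpos.le) x)
            · have h' : x ∈ {x : Fin d → ℝ | ε ^ 2 ≤ sqnorm (x - μ)} :=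
                ((Real.lt_sqrt hε.le).1 (not_le.1 h)).le
              rw [Set.indicator_of_mem h', neg_neg]
              linarith [hS0 x]
      _ = M + C * p := by
          rw [integral_add hSint hind, integral_indicator_const _ hmeas, smul_eq_mul, mul_comm]
  rcases hM0.eq_or_lt with h | h
  · have hp0 : p ≤ 0 := by
      rw [← h] at hmark
      by_contra hcon
      have : 0 < ε ^ 2 * p := mul_pos (by positivity) (not_le.1 hcon)
      linarith
    have hl : cliffJVec μ ε C μ - ∫ x, cliffJVec μ ε C x ∂ν ≤ 0 := by
      have := mul_nonpos_of_nonneg_of_nonpos hCpos.le hp0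
      linarith
    rw [← h]
    refine ⟨?_, fun _ => by simpa using hl⟩
    refine hl.trans ?_
    positivity
  · have ht := mul_le_mul_of_nonneg_left (htail h) hCpos.le
    constructor
    · have : Real.exp (-(κ * ε ^ 2 / M))
          ≤ Real.exp (-(κ / 2 * ε ^ 2) / (2 * (1 / 2 * M))) := by
        apply Real.exp_le_exp.2
        rw [neg_div, neg_le_neg_iff, show 2 * (1 / 2 * M) = M by ring]
        gcongr
        linarith
      have h2 := mul_le_mul_of_nonneg_left this (mul_pos hCpos hc0).le
      linarith
    · intro hε2
      have h1 : Real.log (c * C / (1 / 2 * M)) ≤ κ * ε ^ 2 / M := by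
        rw [le_div_iff₀ h]
        have : κ * ((κ / 2)⁻¹ * (1 / 2 * M) * Real.log (c * C / (1 / 2 * M))) ≤ κ * ε ^ 2 :=
          mul_le_mul_of_nonneg_left hε2 hκ.le
        refine le_trans (le_of_eq ?_) this
        field_simp
      have h2 : c * C / (1 / 2 * M) ≤ Real.exp (κ * ε ^ 2 / M) :=
        (Real.log_le_iff_le_exp (by positivity)).1 h1
      have h3 : C * (c * Real.exp (-(κ * ε ^ 2 / M))) ≤ 1 / 2 * M := by
        rw [Real.exp_neg, ← mul_assoc, ← div_eq_mul_inv, div_le_iff₀ (Real.exp_pos _)]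
        rw [div_le_iff₀ (by positivity)] at h2
        linarith
      linarith
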